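/- Let 2 < p < ∞. There is a constant C' = C'(p) such that for every finite set Λ ⊂ ℕ, ‖Σ_{m∈Λ} ψ_m‖_{L_p} ≤ C' |Λ|^{1/2}. -/

import Mathlib

open MeasureTheory Filter

noncomputable section

/-- Rademacher functions `r_k(t) = sign (sin (2^k π t))`, for `k ≥ 1`. -/
def rademacher (k : ℕ) (t : ℝ) : ℝ := Real.sign (Real.sin ((2:ℝ) ^ k * Real.pi * t))

/-- The Walsh system: for `n = ∑ ε_j 2^(j-1)`, `W_n = ∏ r_j^(ε_j)`. -/
def walsh (n : ℕ) (t : ℝ) : ℝ :=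
  ∏ j ∈ Finset.range n, if n.testBit j then rademacher (j + 1) t else 1

/-- The Olevskiĭ matrix entries `a_{ij}^{(k)}`, with `1 ≤ i, j ≤ 2^k` (1-based indices). -/
def olevskii (k i j : ℕ) : ℝ :=
  if j = 1 then (2:ℝ) ^ (-(k:ℝ) / 2)
  else
    let s := Nat.log 2 (j - 1)
    let ν := j - 2 ^ s
    if (ν - 1) * 2 ^ (k - s) < i ∧ i ≤ (2 * ν - 1) * 2 ^ (k - s - 1) then
      (2:ℝ) ^ (((s:ℝ) - k) / 2)
    else if (2 * ν - 1) * 2 ^ (k - s - 1) < i ∧ i ≤ ν * 2 ^ (k - s) then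
      -((2:ℝ) ^ (((s:ℝ) - k) / 2))
    else 0

/-- `N_k = 2^(10^k)`. -/
def Nn (k : ℕ) : ℕ := 2 ^ 10 ^ k

/-- `F_0 = 0`, `F_k = F_(k-1) + N_k - 1`. -/
def Fn : ℕ → ℕ
  | 0 => 0
  | k + 1 => Fn k + Nn (k + 1) - 1

/-- `φ_k`, the `k`-th (1-based) Walsh function that is not a Rademacher function,
in the Walsh order. -/
def phi (k : ℕ) : ℝ → ℝ := walsh (Nat.nth (fun n => ¬ ∃ m : ℕ, n = 2 ^ m) (k - 1))

/-- `ψ_i^{(k)} = φ_k/√N_k + ∑_{j=2}^{N_k} a_{ij}^{(10^k)} r_{F_{k-1}+j-1}`. -/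
def psiBlock (k i : ℕ) : ℝ → ℝ := fun t =>
  phi k t / Real.sqrt (Nn k) +
    ∑ j ∈ Finset.Icc 2 (Nn k), olevskii (10 ^ k) i j * rademacher (Fn (k - 1) + j - 1) t

/-- Cumulative block lengths: `cum k = N_1 + ⋯ + N_k`. -/
def cum : ℕ → ℕ
  | 0 => 0
  | k + 1 => cum k + Nn (k + 1)

lemma le_cum (k : ℕ) : k ≤ cum k := by
  induction k with
  | zero => simp [cum]
  | succ k ih =>
      have h : 1 ≤ Nn (k + 1) := Nat.one_le_two_pow
      simp only [cum]; omega

/-- `psi m` is `ψ_{m+1}`, the `(m+1)`-th element of the system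
`B = (ψ_1^{(1)}, …, ψ_{N_1}^{(1)}, ψ_1^{(2)}, …)` (0-based global indexing). -/
def psi (m : ℕ) : ℝ → ℝ :=
  let k := Nat.find (show ∃ k, m + 1 ≤ cum k from ⟨m + 1, le_cum (m + 1)⟩)
  psiBlock k (m + 1 - cum (k - 1))

/-- `⟨f, g⟩ = ∫_0^1 f g`. -/
def inner01 (f g : ℝ → ℝ) : ℝ := ∫ t in Set.Icc (0:ℝ) 1, f t * g t

/-- The `L_p([0,1])` norm of a function. -/
def LpNorm (p : ℝ) (f : ℝ → ℝ) : ℝ :=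
  (∫ t in Set.Icc (0:ℝ) 1, |f t| ^ p) ^ (1 / p)

/-- `ρ` is a greedy ordering for the coefficient sequence `c`. -/
def IsGreedyOrdering (c : ℕ → ℝ) (ρ : ℕ → ℕ) : Prop :=
  Function.Injective ρ ∧ {j | c j ≠ 0} ⊆ Set.range ρ ∧
    ∀ j k : ℕ, j < k → |c (ρ k)| < |c (ρ j)| ∨ (|c (ρ k)| = |c (ρ j)| ∧ ρ j < ρ k)

end

/-!
By Parseval for the orthogonal Olevskiĭ matrices, the Rademacher part of `∑ a_m ψ_m` has
coefficients of `ℓ²` norm at most `(∑ |a_m|²)^(1/2)`; being a combination of independent signs, it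
is sub-Gaussian with variance proxy `∑ |a_m|²`. The remaining part `∑_k (∑_i a_{k,i}) φ_k / √N_k` is
small uniformly: if `|a_m| ≤ 1`, the `k`-th coefficient is at most `√N_k` in absolute value, and
since `√N_k` grows geometrically, the square of the sum of the absolute values is at most
`3 ∑ |a_m|`. With `σ² = ∑ |a_m|`, the whole sum is a sub-Gaussian function of variance proxy `σ²`
perturbed by a function of size `O(σ)`, so its `p`-th moment is `O(σ^p)`.
-/

open ProbabilityTheory
open scoped NNReal

/-! ### Rademacher functions -/

lemma rademacher_succ (k : ℕ) (t : ℝ) : rademacher (k + 1) t = rademacher k (2 * t) := by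
  unfold rademacher
  congr 2
  ring

lemma rademacher_succ_periodic (k : ℕ) : Function.Periodic (rademacher (k + 1)) 1 := by
  intro t
  unfold rademacher
  have harg : (2 : ℝ) ^ (k + 1) * Real.pi * (t + 1) =
      2 ^ (k + 1) * Real.pi * t + (2 ^ k : ℕ) * (2 * Real.pi) := by
    push_cast
    ring
  rw [harg, Real.sin_add_nat_mul_two_pi]

lemma abs_rademacher_le_one (k : ℕ) (t : ℝ) : |rademacher k t| ≤ 1 := by
  unfold rademacher
  rcases Real.sign_apply_eq (Real.sin (2 ^ k * Real.pi * t)) with h | h | h <;> simp [h]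

lemma measurable_rademacher (k : ℕ) : Measurable (rademacher k) := by
  have hsign : Measurable Real.sign :=
    Measurable.ite measurableSet_Iio measurable_const
      (Measurable.ite measurableSet_Ioi measurable_const measurable_const)
  exact hsign.comp (by fun_prop)

lemma rademacher_one_of_mem_Ioo_zero_half {t : ℝ} (ht : t ∈ Set.Ioo (0 : ℝ) (1 / 2)) :
    rademacher 1 t = 1 := by
  obtain ⟨ht0, ht1⟩ := ht
  refine Real.sign_of_pos (Real.sin_pos_of_pos_of_lt_pi (by positivity) ?_)
  nlinarith [Real.pi_pos]

lemma rademacher_one_of_mem_Ioo_half_one {t : ℝ} (ht : t ∈ Set.Ioo (1 / 2 : ℝ) 1) :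
    rademacher 1 t = -1 := by
  obtain ⟨ht0, ht1⟩ := ht
  refine Real.sign_of_neg ?_
  rw [← neg_pos, ← Real.sin_sub_pi]
  apply Real.sin_pos_of_pos_of_lt_pi <;> nlinarith [Real.pi_pos]

/-- `r_1` is independent of every function of `2t mod 1`. -/
lemma integral_comp_rademacher_one_mul {g : ℝ → ℝ} (hg : Function.Periodic g 1)
    (hint : IntervalIntegrable g volume 0 1) (u : ℝ → ℝ) :
    ∫ t in (0 : ℝ)..1, u (rademacher 1 t) * g (2 * t) =
      (u 1 + u (-1)) / 2 * ∫ t in (0 : ℝ)..1, g t := by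
  have hleft : Set.EqOn (fun t ↦ u 1 * g (2 * t)) (fun t ↦ u (rademacher 1 t) * g (2 * t))
      (Set.Ioo 0 (1 / 2)) := fun t ht ↦ by
    simp only [rademacher_one_of_mem_Ioo_zero_half ht]
  have hright : Set.EqOn (fun t ↦ u (-1) * g (2 * t)) (fun t ↦ u (rademacher 1 t) * g (2 * t))
      (Set.Ioo (1 / 2) 1) := fun t ht ↦ by
    simp only [rademacher_one_of_mem_Ioo_half_one ht]
  have hint_two_mul (a b : ℝ) : IntervalIntegrable (fun t ↦ g (2 * t)) volume a b :=
    ((hg.intervalIntegrable₀ one_ne_zero hint (2 * a) (2 * b)).comp_mul_left (c := 2)).mono_set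
      (by simp)
  have hshift : ∫ t in (1 : ℝ)..2, g t = ∫ t in (0 : ℝ)..1, g t := by
    simpa [one_add_one_eq_two] using hg.intervalIntegral_add_eq 1 0
  rw [← intervalIntegral.integral_add_adjacent_intervals (b := 1 / 2)
      (((hint_two_mul 0 (1 / 2)).const_mul (u 1)).congr_uIoo (by
        rwa [Set.uIoo_of_le (by norm_num)]))
      (((hint_two_mul (1 / 2) 1).const_mul (u (-1))).congr_uIoo (by
        rwa [Set.uIoo_of_le (by norm_num)])),
    ← intervalIntegral.integral_congr_Ioo_of_le (by norm_num) hleft,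
    ← intervalIntegral.integral_congr_Ioo_of_le (by norm_num) hright,
    intervalIntegral.integral_const_mul, intervalIntegral.integral_const_mul,
    intervalIntegral.integral_comp_mul_left g two_ne_zero,
    intervalIntegral.integral_comp_mul_left g two_ne_zero]
  norm_num [hshift]
  ring

lemma integrable_exp_sum_rademacher {ι : Type*} (s : Finset ι) (κ : ι → ℕ) (c : ι → ℝ)
    (μ : Measure ℝ) [IsFiniteMeasure μ] :
    Integrable (fun t ↦ Real.exp (∑ x ∈ s, c x * rademacher (κ x) t)) μ := by
  have hmeas := measurable_rademacher
  refine Integrable.of_bound (C := Real.exp (∑ x ∈ s, |c x|))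
    (by fun_prop) (Eventually.of_forall fun t ↦ ?_)
  rw [Real.norm_eq_abs, Real.abs_exp, Real.exp_le_exp]
  refine Finset.sum_le_sum fun x _ ↦ (le_abs_self _).trans ?_
  rw [abs_mul]
  exact mul_le_of_le_one_right (abs_nonneg _) (abs_rademacher_le_one _ _)

lemma integral_exp_sum_range_rademacher (n : ℕ) (c : ℕ → ℝ) :
    ∫ t in (0 : ℝ)..1, Real.exp (∑ l ∈ Finset.range n, c l * rademacher (l + 1) t) =
      ∏ l ∈ Finset.range n, Real.cosh (c l) := by
  induction n generalizing c with
  | zero => simp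
  | succ n ih =>
    let g : ℝ → ℝ := fun t ↦
      Real.exp (∑ l ∈ Finset.range n, c (l + 1) * rademacher (l + 1) t)
    have hg : Function.Periodic g 1 := fun t ↦ by
      simp only [g, rademacher_succ_periodic _ t]
    have hint : IntervalIntegrable g volume 0 1 :=
      (intervalIntegrable_iff_integrableOn_Ioc_of_le zero_le_one).2
        (integrable_exp_sum_rademacher _ (· + 1) (fun l ↦ c (l + 1)) _)
    have hsplit (t : ℝ) :
        Real.exp (∑ l ∈ Finset.range (n + 1), c l * rademacher (l + 1) t) =
          Real.exp (c 0 * rademacher 1 t) * g (2 * t) := by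
      simp only [g, Finset.sum_range_succ', rademacher_succ (_ + 1), ← Real.exp_add]
      rw [zero_add, add_comm]
    simp only [hsplit]
    rw [integral_comp_rademacher_one_mul hg hint fun x ↦ Real.exp (c 0 * x), ih,
      Finset.prod_range_succ', Real.cosh_eq (c 0), mul_one, mul_neg_one, mul_comm]

theorem integral_exp_sum_rademacher {ι : Type*} {s : Finset ι} {κ : ι → ℕ}
    (hinj : Set.InjOn κ s) (hpos : ∀ x ∈ s, 0 < κ x) (c : ι → ℝ) :
    ∫ t in Set.Icc (0 : ℝ) 1, Real.exp (∑ x ∈ s, c x * rademacher (κ x) t) =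
      ∏ x ∈ s, Real.cosh (c x) := by
  let d : ℕ → ℝ := fun l ↦ Function.extend (fun x : s ↦ κ x) (fun x ↦ c x) 0 (l + 1)
  let e : ι → ℕ := fun x ↦ κ x - 1
  let n := s.sup κ
  have hsucc {x : ι} (hx : x ∈ s) : e x + 1 = κ x := Nat.sub_add_cancel (hpos x hx)
  have he : Set.InjOn e s := fun x hx y hy h ↦ hinj hx hy (by
    rw [← hsucc hx, ← hsucc hy, h])
  have hmaps : Set.MapsTo e s (Finset.range n) := fun x hx ↦ by
    have hle : κ x ≤ n := Finset.le_sup hx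
    have hx_succ := hsucc hx
    simp only [Finset.coe_range, Set.mem_Iio]
    lia
  have hd {x : ι} (hx : x ∈ s) : d (e x) = c x := by
    simp only [d, hsucc hx]
    exact hinj.injective.extend_apply (fun y : s ↦ c y) 0 ⟨x, hx⟩
  have hd_zero {l : ℕ} (hl : l ∉ e '' s) : d l = 0 :=
    Function.extend_apply' _ _ _ fun ⟨x, hx⟩ ↦ hl ⟨x, x.2, Nat.sub_eq_of_eq_add hx⟩
  calc
    _ = ∫ t in Set.Icc (0 : ℝ) 1,
          Real.exp (∑ l ∈ Finset.range n, d l * rademacher (l + 1) t) := by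
      congr! 3 with t
      exact Finset.sum_of_injOn e he hmaps (fun l _ hl ↦ by simp [hd_zero hl])
        fun x hx ↦ by rw [hd hx, hsucc hx]
    _ = ∏ l ∈ Finset.range n, Real.cosh (d l) := by
      rw [integral_Icc_eq_integral_Ioc, ← intervalIntegral.integral_of_le zero_le_one,
        integral_exp_sum_range_rademacher]
    _ = _ := (Finset.prod_of_injOn e he hmaps (fun l _ hl ↦ by simp [hd_zero hl])
        fun x hx ↦ by rw [hd hx]).symm

theorem hasSubgaussianMGF_sum_rademacher {ι : Type*} {s : Finset ι} {κ : ι → ℕ}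
    (hinj : Set.InjOn κ s) (hpos : ∀ x ∈ s, 0 < κ x) {c : ι → ℝ} {v : ℝ≥0}
    (hv : ∑ x ∈ s, c x ^ 2 ≤ v) :
    HasSubgaussianMGF (fun t ↦ ∑ x ∈ s, c x * rademacher (κ x) t) v
      (volume.restrict (Set.Icc 0 1)) where
  integrable_exp_mul u := by
    simp only [Finset.mul_sum, ← mul_assoc]
    exact integrable_exp_sum_rademacher s κ (fun x ↦ u * c x) _
  mgf_le u := by
    simp only [mgf, Finset.mul_sum, ← mul_assoc]
    rw [integral_exp_sum_rademacher hinj hpos]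
    calc ∏ x ∈ s, Real.cosh (u * c x)
      _ ≤ ∏ x ∈ s, Real.exp ((u * c x) ^ 2 / 2) :=
        Finset.prod_le_prod (fun x _ ↦ (Real.cosh_pos _).le)
          fun x _ ↦ Real.cosh_le_exp_half_sq _
      _ = Real.exp ((∑ x ∈ s, c x ^ 2) * u ^ 2 / 2) := by
        rw [← Real.exp_sum, ← Finset.sum_div, Finset.sum_mul]
        congr! 3
        ring
      _ ≤ Real.exp (v * u ^ 2 / 2) := by gcongr

/-! ### Moments of perturbed sub-Gaussian functions -/

section Moments

variable {Ω : Type*} [MeasurableSpace Ω] {μ : Measure Ω} {X g : Ω → ℝ} {σ : ℝ≥0} {B p : ℝ}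

lemma rpow_abs_le_of_abs_sub_le {x y τ : ℝ} (hp : 0 ≤ p) (hτ : 0 < τ)
    (hxy : |x - y| ≤ B * τ) :
    |x| ^ p ≤ (p * τ) ^ p * Real.exp B * (Real.exp (τ⁻¹ * y) + Real.exp (-τ⁻¹ * y)) := by
  have hdiff : |τ⁻¹ * x - τ⁻¹ * y| ≤ B := by
    rw [← mul_sub, abs_mul, abs_of_pos (inv_pos.2 hτ), inv_mul_le_iff₀ hτ, mul_comm]
    exact hxy
  obtain ⟨hlower, hupper⟩ := abs_le.1 hdiff
  calc |x| ^ p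
    _ ≤ (p * τ) ^ p * max (Real.exp (τ⁻¹ * x)) (Real.exp (-τ⁻¹ * x)) := by
      simpa using rpow_abs_le_mul_max_exp_of_pos x hp (inv_pos.2 hτ)
    _ ≤ (p * τ) ^ p * (Real.exp (B + τ⁻¹ * y) + Real.exp (B + -τ⁻¹ * y)) := by
      gcongr
      refine max_le (le_add_of_le_of_nonneg ?_ (Real.exp_nonneg _))
        (le_add_of_nonneg_of_le (Real.exp_nonneg _) ?_) <;>
      exact Real.exp_le_exp.2 (by linarith)
    _ = _ := by
      rw [Real.exp_add, Real.exp_add]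
      ring

theorem integral_rpow_abs_le_of_hasSubgaussianMGF (hX : HasSubgaussianMGF X (σ ^ 2) μ)
    (hσ : 0 < σ) (hp : 0 ≤ p) (hg : ∀ ω, |g ω - X ω| ≤ B * σ) :
    ∫ ω, |g ω| ^ p ∂μ ≤ (p * σ) ^ p * (2 * Real.exp (B + 1 / 2)) := by
  have hσ' : (0 : ℝ) < σ := hσ
  have hmgf (u : ℝ) (hu : u ^ 2 = (σ⁻¹ : ℝ) ^ 2) :
      ∫ ω, Real.exp (u * X ω) ∂μ ≤ Real.exp (1 / 2) := by
    refine (hX.mgf_le u).trans_eq ?_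
    rw [hu, NNReal.coe_pow, ← mul_pow, mul_inv_cancel₀ hσ'.ne', one_pow]
  calc ∫ ω, |g ω| ^ p ∂μ
    _ ≤ ∫ ω, (p * σ) ^ p * Real.exp B *
          (Real.exp ((σ : ℝ)⁻¹ * X ω) + Real.exp (-(σ : ℝ)⁻¹ * X ω)) ∂μ :=
      integral_mono_of_nonneg (Eventually.of_forall fun ω ↦ by positivity)
        (((hX.integrable_exp_mul _).add (hX.integrable_exp_mul _)).const_mul _)
        (Eventually.of_forall fun ω ↦ rpow_abs_le_of_abs_sub_le hp hσ' (hg ω))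
    _ ≤ (p * σ) ^ p * Real.exp B * (Real.exp (1 / 2) + Real.exp (1 / 2)) := by
      rw [integral_const_mul,
        integral_add (hX.integrable_exp_mul _) (hX.integrable_exp_mul _)]
      gcongr
      exacts [hmgf _ rfl, hmgf _ (neg_sq _)]
    _ = _ := by
      rw [Real.exp_add]
      ring

end Moments

theorem LpNorm_le_of_hasSubgaussianMGF {p : ℝ} (hp : 0 < p) {X g : ℝ → ℝ} {σ : ℝ≥0} {B : ℝ}
    (hX : HasSubgaussianMGF X (σ ^ 2) (volume.restrict (Set.Icc 0 1))) (hσ : 0 < σ)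
    (hg : ∀ t, |g t - X t| ≤ B * σ) :
    LpNorm p g ≤ p * (2 * Real.exp (B + 1 / 2)) ^ (1 / p) * σ := by
  calc LpNorm p g
    _ ≤ ((p * σ) ^ p * (2 * Real.exp (B + 1 / 2))) ^ (1 / p) :=
      Real.rpow_le_rpow (integral_nonneg fun t ↦ by positivity)
        (integral_rpow_abs_le_of_hasSubgaussianMGF hX hσ hp.le hg) (by positivity)
    _ = _ := by
      rw [Real.mul_rpow (by positivity) (by positivity), ← Real.rpow_mul (by positivity),
        mul_one_div_cancel hp.ne', Real.rpow_one]
      ring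

/-! ### Parseval identity for the Olevskiĭ matrix -/

/-- The sum of `x` over the `ν`-th (0-based) interval of length `L`. -/
def intervalSum (x : ℕ → ℝ) (L ν : ℕ) : ℝ := ∑ i ∈ Finset.Ico (ν * L) ((ν + 1) * L), x i

lemma intervalSum_two_mul (x : ℕ → ℝ) (L ν : ℕ) :
    intervalSum x (2 * L) ν = intervalSum x L (2 * ν) + intervalSum x L (2 * ν + 1) := by
  unfold intervalSum
  rw [Finset.sum_Ico_consecutive _ (by gcongr; lia) (by gcongr; lia)]
  congr 2 <;> ring

lemma intervalSum_one (x : ℕ → ℝ) (ν : ℕ) : intervalSum x 1 ν = x ν := by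
  simp [intervalSum]

lemma sum_range_two_mul {M : Type*} [AddCommMonoid M] (f : ℕ → M) (n : ℕ) :
    ∑ i ∈ Finset.range (2 * n), f i = ∑ i ∈ Finset.range n, (f (2 * i) + f (2 * i + 1)) := by
  induction n with
  | zero => simp
  | succ n ih =>
    rw [mul_add_one, Finset.sum_range_succ, Finset.sum_range_succ, ih, Finset.sum_range_succ,
      add_assoc]

lemma olevskii_two_pow_add {s r k ν : ℕ} (hk : s + (r + 1) = k) (hν : ν < 2 ^ s) (i : ℕ) :
    olevskii k (i + 1) (2 ^ s + ν + 1) = (2 : ℝ) ^ (-((r : ℝ) + 1) / 2) *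
      ((if i ∈ Finset.Ico (2 * ν * 2 ^ r) ((2 * ν + 1) * 2 ^ r) then 1 else 0) -
        if i ∈ Finset.Ico ((2 * ν + 1) * 2 ^ r) ((2 * ν + 1 + 1) * 2 ^ r) then 1 else 0) := by
  have hlog : Nat.log 2 (2 ^ s + ν) = s :=
    Nat.log_eq_of_pow_le_of_lt_pow (Nat.le_add_right _ _) (by rw [pow_succ]; lia)
  have hexp : ((s : ℝ) - k) / 2 = -((r : ℝ) + 1) / 2 := by
    rw [← hk]
    push_cast
    ring
  have hsub : k - s = r + 1 := by lia
  have hν_sub : 2 ^ s + ν + 1 - 2 ^ s = ν + 1 := by lia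
  have hstart : ν * (2 ^ r * 2) = 2 * ν * 2 ^ r := by ring
  have hend : (ν + 1) * (2 ^ r * 2) = (2 * ν + 1 + 1) * 2 ^ r := by ring
  have hmid : 2 * (ν + 1) - 1 = 2 * ν + 1 := by lia
  unfold olevskii
  rw [if_neg (by lia)]
  simp only [Nat.add_sub_cancel, hlog, hexp, hsub, hν_sub, hmid, pow_succ, hstart, hend,
    Finset.mem_Ico]
  split_ifs <;> first | lia | simp

lemma sum_mul_olevskii_two_pow_add (x : ℕ → ℝ) {s r k ν : ℕ} (hk : s + (r + 1) = k)
    (hν : ν < 2 ^ s) :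
    ∑ i ∈ Finset.range (2 ^ k), x i * olevskii k (i + 1) (2 ^ s + ν + 1) =
      (2 : ℝ) ^ (-((r : ℝ) + 1) / 2) *
        (intervalSum x (2 ^ r) (2 * ν) - intervalSum x (2 ^ r) (2 * ν + 1)) := by
  have hrestrict (a : ℕ) (ha : a < 2 * 2 ^ s) :
      ∑ i ∈ Finset.range (2 ^ k),
        (if i ∈ Finset.Ico (a * 2 ^ r) ((a + 1) * 2 ^ r) then x i else 0) =
        intervalSum x (2 ^ r) a := by
    have hsubset : Finset.Ico (a * 2 ^ r) ((a + 1) * 2 ^ r) ⊆ Finset.range (2 ^ k) := by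
      rw [Finset.range_eq_Ico]
      refine Finset.Ico_subset_Ico (Nat.zero_le _) ?_
      calc (a + 1) * 2 ^ r
        _ ≤ 2 * 2 ^ s * 2 ^ r := by gcongr; lia
        _ = 2 ^ k := by rw [← hk]; ring
    rw [Finset.sum_ite_mem, Finset.inter_eq_right.2 hsubset, intervalSum]
  rw [← hrestrict _ (by lia), ← hrestrict _ (by lia), ← Finset.sum_sub_distrib, Finset.mul_sum]
  refine Finset.sum_congr rfl fun i _ ↦ ?_
  rw [olevskii_two_pow_add hk hν, mul_left_comm, mul_sub, mul_ite, mul_ite, mul_one, mul_zero]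

/-- The first `2^s` columns span the vectors that are constant on the intervals of length
`2^(k-s)`. -/
lemma sum_sq_sum_mul_olevskii (x : ℕ → ℝ) (s : ℕ) {r k : ℕ} (hk : s + r = k) :
    ∑ j ∈ Finset.range (2 ^ s),
        (∑ i ∈ Finset.range (2 ^ k), x i * olevskii k (i + 1) (j + 1)) ^ 2 =
      (∑ ν ∈ Finset.range (2 ^ s), intervalSum x (2 ^ r) ν ^ 2) / 2 ^ r := by
  have hsq (y : ℝ) : ((2 : ℝ) ^ (-y / 2)) ^ 2 = (2 ^ y)⁻¹ := by
    rw [← Real.rpow_mul_natCast zero_le_two, ← Real.rpow_neg zero_le_two]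
    congr 1
    push_cast
    ring
  induction s generalizing r with
  | zero =>
    obtain rfl : r = k := by simpa using hk
    have hcol (i : ℕ) : olevskii r (i + 1) 1 = 2 ^ (-(r : ℝ) / 2) := if_pos rfl
    simp only [pow_zero, Finset.sum_range_one, zero_add, hcol, ← Finset.sum_mul, mul_pow, hsq,
      Real.rpow_natCast, intervalSum, zero_mul, one_mul, ← Finset.range_eq_Ico]
    rw [div_eq_mul_inv]
  | succ s ih =>
    have hk' : s + (r + 1) = k := by lia
    have hnew (ν : ℕ) (hν : ν ∈ Finset.range (2 ^ s)) :
        (∑ i ∈ Finset.range (2 ^ k), x i * olevskii k (i + 1) (2 ^ s + ν + 1)) ^ 2 =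
          (intervalSum x (2 ^ r) (2 * ν) - intervalSum x (2 ^ r) (2 * ν + 1)) ^ 2 /
            2 ^ (r + 1) := by
      rw [sum_mul_olevskii_two_pow_add x hk' (Finset.mem_range.1 hν), mul_pow, hsq,
        mul_comm, div_eq_mul_inv]
      norm_cast
    rw [pow_succ' 2 s, sum_range_two_mul (fun ν ↦ intervalSum x (2 ^ r) ν ^ 2),
      two_mul, Finset.sum_range_add, ih hk', Finset.sum_congr rfl hnew, Finset.sum_div,
      Finset.sum_div, ← Finset.sum_add_distrib]
    refine Finset.sum_congr rfl fun ν _ ↦ ?_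
    rw [pow_succ' 2 r, intervalSum_two_mul]
    field

theorem sum_sq_sum_mul_olevskii_eq_sum_sq (x : ℕ → ℝ) (k : ℕ) :
    ∑ j ∈ Finset.range (2 ^ k),
        (∑ i ∈ Finset.range (2 ^ k), x i * olevskii k (i + 1) (j + 1)) ^ 2 =
      ∑ i ∈ Finset.range (2 ^ k), x i ^ 2 := by
  simpa [intervalSum_one] using sum_sq_sum_mul_olevskii x k (add_zero k)

lemma sum_Icc_two_sq_sum_mul_olevskii_le (x : ℕ → ℝ) (k : ℕ) :
    ∑ j ∈ Finset.Icc 2 (2 ^ k),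
        (∑ i ∈ Finset.range (2 ^ k), x i * olevskii k (i + 1) j) ^ 2 ≤
      ∑ i ∈ Finset.range (2 ^ k), x i ^ 2 := by
  rw [← sum_sq_sum_mul_olevskii_eq_sum_sq, Finset.range_eq_Ico,
    Finset.sum_Ico_add' (fun j ↦ (∑ i ∈ Finset.Ico 0 (2 ^ k), x i * olevskii k (i + 1) j) ^ 2)]
  refine Finset.sum_le_sum_of_subset_of_nonneg (fun j hj ↦ ?_) fun _ _ _ ↦ sq_nonneg _
  rw [Finset.mem_Icc] at hj
  rw [Finset.mem_Ico]
  lia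

/-! ### Lacunary sums -/

section Lacunary

variable {s b : ℕ → ℝ}

lemma sum_range_le_of_two_mul_le (hs : ∀ k, 2 * s k ≤ s (k + 1)) (hs₀ : 0 ≤ s 0) (K : ℕ) :
    ∑ k ∈ Finset.range K, s k ≤ s K := by
  induction K with
  | zero => simpa
  | succ K ih =>
    rw [Finset.sum_range_succ]
    linarith [hs K]

lemma sq_sum_range_le_of_two_mul_le (hs : ∀ k, 2 * s k ≤ s (k + 1)) (hb : ∀ k, 0 ≤ b k)
    (hbs : ∀ k, b k ≤ s k) (K : ℕ) :
    (∑ k ∈ Finset.range K, b k) ^ 2 ≤ 3 * ∑ k ∈ Finset.range K, b k * s k := by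
  induction K with
  | zero => simp
  | succ K ih =>
    have hhead : ∑ k ∈ Finset.range K, b k ≤ s K :=
      (Finset.sum_le_sum fun k _ ↦ hbs k).trans
        (sum_range_le_of_two_mul_le hs ((hb 0).trans (hbs 0)) K)
    rw [Finset.sum_range_succ, Finset.sum_range_succ]
    linarith [mul_le_mul_of_nonneg_right hhead (hb K),
      mul_le_mul_of_nonneg_left (hbs K) (hb K)]

end Lacunary

lemma Nn_pos (k : ℕ) : 0 < Nn k := Nat.two_pow_pos _

lemma two_mul_sqrt_Nn_le (k : ℕ) : 2 * √(Nn k) ≤ √(Nn (k + 1)) := by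
  have hexp : 2 + 10 ^ k ≤ 10 ^ (k + 1) := by
    rw [pow_succ]
    linarith [Nat.one_le_pow k 10 (by norm_num)]
  have hfour : 4 * Nn k ≤ Nn (k + 1) :=
    calc 4 * Nn k
      _ = 2 ^ (2 + 10 ^ k) := by rw [pow_add]; rfl
      _ ≤ Nn (k + 1) := Nat.pow_le_pow_right two_pos hexp
  apply Real.le_sqrt_of_sq_le
  rw [mul_pow, Real.sq_sqrt (Nat.cast_nonneg _)]
  norm_num
  exact_mod_cast hfour

/-! ### The blocks of the system -/

lemma abs_phi_le_one (k : ℕ) (t : ℝ) : |phi k t| ≤ 1 := by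
  unfold phi walsh
  rw [Finset.abs_prod]
  refine Finset.prod_le_one (fun _ _ ↦ abs_nonneg _) fun j _ ↦ ?_
  split_ifs
  · exact abs_rademacher_le_one _ _
  · simp

lemma cum_mono : Monotone cum := monotone_nat_of_le_succ fun _ ↦ Nat.le_add_right _ _

lemma exists_subset_range_cum (Λ : Finset ℕ) : ∃ K, Λ ⊆ Finset.range (cum K) :=
  ⟨Λ.sup id + 1, fun _ hm ↦ Finset.mem_range.2 <|
    (Nat.lt_succ_of_le (Finset.le_sup (f := id) hm)).trans_le (le_cum _)⟩

lemma sum_range_cum {M : Type*} [AddCommMonoid M] (f : ℕ → M) (K : ℕ) :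
    ∑ m ∈ Finset.range (cum K), f m =
      ∑ k ∈ Finset.range K, ∑ i ∈ Finset.range (Nn (k + 1)), f (cum k + i) := by
  induction K with
  | zero => simp [cum]
  | succ K ih => rw [cum, Finset.sum_range_add, ih, Finset.sum_range_succ]

lemma psi_cum_add {k i : ℕ} (hi : i < Nn (k + 1)) :
    psi (cum k + i) = psiBlock (k + 1) (i + 1) := by
  have hexists : ∃ n, cum k + i + 1 ≤ cum n := ⟨cum k + i + 1, le_cum _⟩
  have hblock : Nat.find hexists = k + 1 := by
    refine (Nat.find_eq_iff _).2 ⟨by simp only [cum]; lia, fun n hn ↦ ?_⟩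
    have hle := cum_mono (Nat.lt_succ_iff.1 hn)
    lia
  simp only [psi, hblock, Nat.add_sub_cancel, add_assoc, Nat.add_sub_cancel_left]

lemma Fn_succ (k : ℕ) : Fn (k + 1) = Fn k + (Nn (k + 1) - 1) :=
  Nat.add_sub_assoc (Nn_pos _) _

lemma Fn_mono : Monotone Fn := monotone_nat_of_le_succ fun k ↦ by
  rw [Fn_succ]
  exact Nat.le_add_right _ _

/-- The pairs `(k, j)` such that `r_{F_k + j - 1}` occurs in one of the first `K` blocks; blocks
are numbered from `0` here. -/
def blockIndices (K : ℕ) : Finset (Σ _ : ℕ, ℕ) :=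
  (Finset.range K).sigma fun k ↦ Finset.Icc 2 (Nn (k + 1))

/-- The index of the Rademacher function attached to `(k, j)`, namely `F_k + j - 1`. -/
def rademacherIndex (x : Σ _ : ℕ, ℕ) : ℕ := Fn x.1 + x.2 - 1

lemma rademacherIndex_mem_Ioc {K : ℕ} {x : Σ _ : ℕ, ℕ} (hx : x ∈ blockIndices K) :
    rademacherIndex x ∈ Set.Ioc (Fn x.1) (Fn (x.1 + 1)) := by
  simp only [blockIndices, Finset.mem_sigma, Finset.mem_Icc] at hx
  rw [Fn_succ, rademacherIndex, Set.mem_Ioc]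
  lia

lemma rademacherIndex_pos {K : ℕ} {x : Σ _ : ℕ, ℕ} (hx : x ∈ blockIndices K) :
    0 < rademacherIndex x :=
  (Nat.zero_le _).trans_lt (rademacherIndex_mem_Ioc hx).1

lemma injOn_rademacherIndex (K : ℕ) : Set.InjOn rademacherIndex (blockIndices K) := by
  rintro ⟨k, j⟩ hx ⟨k', j'⟩ hy h
  have hk : k = k' := by
    by_contra hne
    exact Set.disjoint_left.1 (Fn_mono.pairwise_disjoint_on_Ioc_succ hne)
      (rademacherIndex_mem_Ioc hx) (h ▸ rademacherIndex_mem_Ioc hy)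
  subst hk
  simp only [blockIndices, Finset.mem_coe, Finset.mem_sigma, Finset.mem_Icc] at hx hy
  simp only [rademacherIndex] at h
  obtain rfl : j = j' := by lia
  rfl

/-! ### Linear combinations of the system -/

section LinearCombination

variable {a : ℕ → ℝ}

/-- The coefficient of `r_{rademacherIndex x}` in `∑ a_m ψ_m`. -/
noncomputable def rademacherCoeff (a : ℕ → ℝ) (x : Σ _ : ℕ, ℕ) : ℝ :=
  ∑ i ∈ Finset.range (Nn (x.1 + 1)), a (cum x.1 + i) * olevskii (10 ^ (x.1 + 1)) (i + 1) x.2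

/-- The Rademacher part of `∑ a_m ψ_m`, summed over the first `K` blocks. -/
noncomputable def rademacherPart (a : ℕ → ℝ) (K : ℕ) (t : ℝ) : ℝ :=
  ∑ x ∈ blockIndices K, rademacherCoeff a x * rademacher (rademacherIndex x) t

lemma sum_range_cum_mul_psi (a : ℕ → ℝ) (K : ℕ) (t : ℝ) :
    ∑ m ∈ Finset.range (cum K), a m * psi m t =
      ∑ k ∈ Finset.range K,
        (∑ i ∈ Finset.range (Nn (k + 1)), a (cum k + i)) / √(Nn (k + 1)) * phi (k + 1) t +
      rademacherPart a K t := by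
  rw [sum_range_cum, rademacherPart, blockIndices, Finset.sum_sigma, ← Finset.sum_add_distrib]
  refine Finset.sum_congr rfl fun k _ ↦ ?_
  have hpsi (i : ℕ) (hi : i ∈ Finset.range (Nn (k + 1))) :
      a (cum k + i) * psi (cum k + i) t =
        a (cum k + i) / √(Nn (k + 1)) * phi (k + 1) t +
        ∑ j ∈ Finset.Icc 2 (Nn (k + 1)),
          a (cum k + i) * olevskii (10 ^ (k + 1)) (i + 1) j * rademacher (Fn k + j - 1) t := by
    simp only [psi_cum_add (Finset.mem_range.1 hi), psiBlock, mul_add, Finset.mul_sum,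
      Nat.add_sub_cancel, mul_assoc]
    ring
  rw [Finset.sum_congr rfl hpsi, Finset.sum_add_distrib, ← Finset.sum_mul, ← Finset.sum_div,
    Finset.sum_comm]
  simp only [rademacherCoeff, rademacherIndex, Finset.sum_mul]

lemma sum_sq_rademacherCoeff_le (a : ℕ → ℝ) (K : ℕ) :
    ∑ x ∈ blockIndices K, rademacherCoeff a x ^ 2 ≤ ∑ m ∈ Finset.range (cum K), a m ^ 2 := by
  rw [sum_range_cum, blockIndices, Finset.sum_sigma]
  exact Finset.sum_le_sum fun k _ ↦
    sum_Icc_two_sq_sum_mul_olevskii_le (fun i ↦ a (cum k + i)) (10 ^ (k + 1))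

lemma sum_range_abs_div_sqrt_Nn_le (ha : ∀ m, |a m| ≤ 1) (K : ℕ) :
    ∑ k ∈ Finset.range K, (∑ i ∈ Finset.range (Nn (k + 1)), |a (cum k + i)|) / √(Nn (k + 1)) ≤
      √3 * √(∑ m ∈ Finset.range (cum K), |a m|) := by
  have hsqrt (k : ℕ) : 0 < √(Nn (k + 1) : ℝ) := Real.sqrt_pos.2 (Nat.cast_pos.2 (Nn_pos _))
  have hblock (k : ℕ) :
      (∑ i ∈ Finset.range (Nn (k + 1)), |a (cum k + i)|) / √(Nn (k + 1)) ≤ √(Nn (k + 1)) := by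
    rw [div_le_iff₀ (hsqrt k), Real.mul_self_sqrt (Nat.cast_nonneg _)]
    simpa using Finset.sum_le_card_nsmul (Finset.range (Nn (k + 1))) _ 1
      fun i _ ↦ ha (cum k + i)
  have hlacunary := sq_sum_range_le_of_two_mul_le (fun k ↦ two_mul_sqrt_Nn_le (k + 1))
    (fun k ↦ by positivity) hblock K
  simp only [div_mul_cancel₀ _ (hsqrt _).ne'] at hlacunary
  rw [← Real.sqrt_mul zero_le_three, sum_range_cum]
  exact Real.le_sqrt_of_sq_le hlacunary

lemma abs_sum_sub_rademacherPart_le (ha : ∀ m, |a m| ≤ 1) (K : ℕ) (t : ℝ) :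
    |∑ m ∈ Finset.range (cum K), a m * psi m t - rademacherPart a K t| ≤
      √3 * √(∑ m ∈ Finset.range (cum K), |a m|) := by
  rw [sum_range_cum_mul_psi, add_sub_cancel_right]
  refine (Finset.abs_sum_le_sum_abs _ _).trans
    ((Finset.sum_le_sum fun k _ ↦ ?_).trans (sum_range_abs_div_sqrt_Nn_le ha K))
  rw [abs_mul, abs_div, abs_of_nonneg (Real.sqrt_nonneg _)]
  refine (mul_le_of_le_one_right (by positivity) (abs_phi_le_one _ _)).trans ?_
  gcongr
  exact Finset.abs_sum_le_sum_abs _ _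

theorem LpNorm_sum_range_cum_le {p : ℝ} (hp : 0 < p) (ha : ∀ m, |a m| ≤ 1) {K : ℕ}
    (hpos : 0 < ∑ m ∈ Finset.range (cum K), |a m|) :
    LpNorm p (fun t ↦ ∑ m ∈ Finset.range (cum K), a m * psi m t) ≤
      p * (2 * Real.exp (√3 + 1 / 2)) ^ (1 / p) *
        √(∑ m ∈ Finset.range (cum K), |a m|) := by
  let σ : ℝ≥0 := ⟨√(∑ m ∈ Finset.range (cum K), |a m|), Real.sqrt_nonneg _⟩
  have hσ : (σ : ℝ) = √(∑ m ∈ Finset.range (cum K), |a m|) := rfl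
  have hcoeff : ∑ x ∈ blockIndices K, rademacherCoeff a x ^ 2 ≤ (σ ^ 2 : ℝ≥0) :=
    calc ∑ x ∈ blockIndices K, rademacherCoeff a x ^ 2
      _ ≤ ∑ m ∈ Finset.range (cum K), a m ^ 2 := sum_sq_rademacherCoeff_le a K
      _ ≤ ∑ m ∈ Finset.range (cum K), |a m| := Finset.sum_le_sum fun m _ ↦ by
        rw [← sq_abs]
        exact pow_le_of_le_one (abs_nonneg _) (ha m) two_ne_zero
      _ = (σ ^ 2 : ℝ≥0) := by
        rw [NNReal.coe_pow, hσ, Real.sq_sqrt hpos.le]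
  exact LpNorm_le_of_hasSubgaussianMGF hp
    (hasSubgaussianMGF_sum_rademacher (injOn_rademacherIndex K)
      (fun _ ↦ rademacherIndex_pos) hcoeff)
    (Real.sqrt_pos.2 hpos) (abs_sum_sub_rademacherPart_le ha K)

end LinearCombination

theorem stmt_8_general (p : ℝ) (hp : 0 < p) :
    ∃ C' : ℝ, ∀ (Λ : Finset ℕ) (a : ℕ → ℝ), (∀ m ∈ Λ, |a m| ≤ 1) →
      LpNorm p (fun t ↦ ∑ m ∈ Λ, a m * psi m t) ≤ C' * (∑ m ∈ Λ, |a m|) ^ ((1 : ℝ) / 2) := by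
  refine ⟨p * (2 * Real.exp (√3 + 1 / 2)) ^ (1 / p), fun Λ a ha ↦ ?_⟩
  rw [← Real.sqrt_eq_rpow]
  rcases (Finset.sum_nonneg fun m (_ : m ∈ Λ) ↦ abs_nonneg (a m)).eq_or_lt with hzero | hpos
  · have ha_zero : ∀ m ∈ Λ, a m = 0 := by
      simpa using (Finset.sum_eq_zero_iff_of_nonneg fun m _ ↦ abs_nonneg (a m)).1 hzero.symm
    have hsum (t : ℝ) : ∑ m ∈ Λ, a m * psi m t = 0 :=
      Finset.sum_eq_zero fun m hm ↦ by rw [ha_zero m hm, zero_mul]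
    simp [LpNorm, hsum, ← hzero, hp.ne']
  · let a' : ℕ → ℝ := (Λ : Set ℕ).indicator a
    obtain ⟨K, hsubset⟩ := exists_subset_range_cum Λ
    have ha' (m : ℕ) : |a' m| ≤ 1 := by
      by_cases hm : m ∈ Λ <;> simp [a', hm, ha]
    have hextend (f : ℕ → ℝ → ℝ) (hf : ∀ m, f m 0 = 0) :
        ∑ m ∈ Finset.range (cum K), f m (a' m) = ∑ m ∈ Λ, f m (a m) :=
      Finset.sum_indicator_subset_of_eq_zero a f hsubset hf
    have habs : ∑ m ∈ Finset.range (cum K), |a' m| = ∑ m ∈ Λ, |a m| :=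
      hextend (fun _ ↦ abs) fun _ ↦ abs_zero
    have hpsi (t : ℝ) : ∑ m ∈ Finset.range (cum K), a' m * psi m t = ∑ m ∈ Λ, a m * psi m t :=
      hextend (fun m x ↦ x * psi m t) fun _ ↦ zero_mul _
    rw [← habs] at hpos ⊢
    rw [← funext hpsi]
    exact LpNorm_sum_range_cum_le hp ha' hpos

/-- For `2 < p < ∞` there is `C'` with `‖∑_{m∈Λ} ψ_m‖_p ≤ C' |Λ|^{1/2}` for all finite `Λ`. -/
theorem stmt_8 (p : ℝ) (hp : 2 < p) :
    ∃ C' : ℝ, ∀ Λ : Finset ℕ,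
      LpNorm p (fun t => ∑ m ∈ Λ, psi m t) ≤ C' * (Λ.card : ℝ) ^ ((1:ℝ)/2) := by
  obtain ⟨C', hC'⟩ := stmt_8_general p (two_pos.trans hp)
  exact ⟨C', fun Λ ↦ by simpa using hC' Λ 1 (by simp)⟩
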